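/- Let G be a group, H ≤ G a subgroup, and F ∈ G an element that m-displaces H for every m ≥ 1, i.e., the subgroups FⁱHF⁻ⁱ, i = 0,1,2,…, pairwise commute elementwise. Then every element h of the commutator subgroup [H,H] satisfies cl_G(h) ≤ 2, i.e., h is a product of at most two commutators of elements of G. -/

import Mathlib

open scoped commutatorElement

/-!
Write `φ` for conjugation by `F`. Suppose `h = ⁅A, B⁆ * ⁅X, F⁆` with `A`, `B`, `X` in the span of
the first few translates `φⁱ(H)`. Then `φ A`, `φ B`, `φ X`, `φ² X`, `φ h` are assembled from later
translates and so commute with `H`. In particular `⁅h, F⁆ = (φ h)⁻¹ * h`, and for `a`, `b` in `H`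
`⁅a, b⁆ * h = ⁅a, b⁆ * φ h * ⁅h, F⁆ = ⁅a, b⁆ * ⁅φ A, φ B⁆ * ⁅φ X, F⁆ * ⁅h, F⁆
  = ⁅a * φ A, b * φ B⁆ * ⁅φ X * h, F⁆`,
so each further commutator is absorbed at the cost of one more displacement.
-/

section CommutatorIdentities

variable {G : Type*} [Group G]

theorem commute_commutatorElement_left {p q x : G} (hp : Commute p x) (hq : Commute q x) :
    Commute ⁅p, q⁆ x :=
  ((hp.mul_left hq).mul_left hp.inv_left).mul_left hq.inv_left

theorem commutatorElement_mul_mul_of_commute {a b p q : G} (hpa : Commute p a) (hpb : Commute p b)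
    (hqa : Commute q a) (hqb : Commute q b) : ⁅a * p, b * q⁆ = ⁅a, b⁆ * ⁅p, q⁆ := by
  have hpqa : Commute ⁅p, q⁆ a := commute_commutatorElement_left hpa hqa
  have hpqb : Commute ⁅p, q⁆ b := commute_commutatorElement_left hpb hqb
  have hp : ⁅p, b * q⁆ = ⁅p, q⁆ := by
    rw [commutatorElement_mul_right_eq_mul_conj, hpb.commutator_eq, one_mul, ← hpqb.eq,
      mul_inv_cancel_right]
  have ha : ⁅a, b * q⁆ = ⁅a, b⁆ := by
    rw [commutatorElement_mul_right_eq_mul_conj, hqa.symm.commutator_eq, mul_one,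
      mul_inv_cancel_right]
  calc ⁅a * p, b * q⁆ = a * ⁅p, q⁆ * a⁻¹ * ⁅a, b⁆ := by
        rw [commutatorElement_mul_left_eq_conj_mul, hp, ha]
    _ = ⁅p, q⁆ * ⁅a, b⁆ := by rw [← hpqa.eq, mul_inv_cancel_right]
    _ = ⁅a, b⁆ * ⁅p, q⁆ := (commute_commutatorElement_left hpqa.symm hpqb.symm).eq.symm

theorem commutatorElement_eq_mul_conj_inv (x g : G) : ⁅x, g⁆ = x * (MulAut.conj g x)⁻¹ := by
  simp [commutatorElement_def, mul_assoc]

theorem commutatorElement_mul_left_of_commute {x y g : G}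
    (hxy : Commute (MulAut.conj g x) ⁅y, g⁆) : ⁅x * y, g⁆ = ⁅x, g⁆ * ⁅y, g⁆ := by
  calc ⁅x * y, g⁆ = x * (⁅y, g⁆ * (MulAut.conj g x)⁻¹) := by
        simp only [commutatorElement_eq_mul_conj_inv, map_mul, mul_inv_rev, mul_assoc]
    _ = x * ((MulAut.conj g x)⁻¹ * ⁅y, g⁆) := by rw [hxy.inv_left.eq]
    _ = ⁅x, g⁆ * ⁅y, g⁆ := by rw [← mul_assoc, ← commutatorElement_eq_mul_conj_inv]

theorem conj_mul_commutatorElement_of_commute {x g : G} (hx : Commute (MulAut.conj g x) x) :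
    MulAut.conj g x * ⁅x, g⁆ = x := by
  rw [commutatorElement_eq_mul_conj_inv, ← mul_assoc, hx.eq, mul_inv_cancel_right]

theorem commutatorElement_mul_eq_of_commute_conj {F a b h A B X : G}
    (hAa : Commute (MulAut.conj F A) a) (hAb : Commute (MulAut.conj F A) b)
    (hBa : Commute (MulAut.conj F B) a) (hBb : Commute (MulAut.conj F B) b)
    (hFh : Commute (MulAut.conj F h) h) (hX : Commute (MulAut.conj F X) h)
    (hFX : Commute (MulAut.conj F (MulAut.conj F X)) h) (hh : h = ⁅A, B⁆ * ⁅X, F⁆) :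
    ⁅a, b⁆ * h =
      ⁅a * MulAut.conj F A, b * MulAut.conj F B⁆ * ⁅MulAut.conj F X * h, F⁆ := by
  have conj_self : MulAut.conj F F = F := by simp
  have conj_h : MulAut.conj F h = ⁅MulAut.conj F A, MulAut.conj F B⁆ * ⁅MulAut.conj F X, F⁆ := by
    rw [hh, map_mul, map_commutatorElement, map_commutatorElement, conj_self]
  have hFX_comm : Commute (MulAut.conj F (MulAut.conj F X)) ⁅h, F⁆ := by
    rw [commutatorElement_eq_mul_conj_inv]
    exact hFX.mul_right (hX.map (MulAut.conj F)).inv_right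
  calc ⁅a, b⁆ * h = ⁅a, b⁆ * (MulAut.conj F h * ⁅h, F⁆) := by
        rw [conj_mul_commutatorElement_of_commute hFh]
    _ = ⁅a, b⁆ * ⁅MulAut.conj F A, MulAut.conj F B⁆ * (⁅MulAut.conj F X, F⁆ * ⁅h, F⁆) := by
        simp only [conj_h, mul_assoc]
    _ = ⁅a * MulAut.conj F A, b * MulAut.conj F B⁆ * ⁅MulAut.conj F X * h, F⁆ := by
        rw [commutatorElement_mul_mul_of_commute hAa hAb hBa hBb,
          commutatorElement_mul_left_of_commute hFX_comm]

end CommutatorIdentities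

section CommutatorLength

open scoped Pointwise

variable {G : Type*} [Group G] {H : Subgroup G} {h : G}

/-- The set of commutators `⁅a, b⁆` with `a`, `b` in `H`. Its pointwise power
`commutatorsIn H ^ n` consists of the elements of commutator length at most `n` in `H`. -/
def commutatorsIn (H : Subgroup G) : Set G := {g | ∃ a ∈ H, ∃ b ∈ H, ⁅a, b⁆ = g}

theorem one_mem_commutatorsIn : 1 ∈ commutatorsIn H :=
  ⟨1, H.one_mem, 1, H.one_mem, commutatorElement_self 1⟩

theorem commutatorsIn_subset : commutatorsIn H ⊆ H := by
  rintro _ ⟨a, ha, b, hb, rfl⟩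
  exact H.commutator_le_self (Subgroup.commutator_mem_commutator ha hb)

theorem mem_of_mem_commutatorsIn_pow {n : ℕ} (hh : h ∈ commutatorsIn H ^ n) : h ∈ H := by
  induction n generalizing h with
  | zero =>
    rw [pow_zero, Set.mem_one] at hh
    exact hh ▸ H.one_mem
  | succ n ih =>
    rw [pow_succ'] at hh
    obtain ⟨x, hx, y, hy, rfl⟩ := hh
    exact H.mul_mem (commutatorsIn_subset hx) (ih hy)

theorem exists_mem_commutatorsIn_pow_succ (hh : h ∈ ⁅H, H⁆) :
    ∃ n : ℕ, h ∈ commutatorsIn H ^ (n + 1) := by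
  rw [Subgroup.commutator_def] at hh
  induction hh using Subgroup.closure_induction_left with
  | one => exact ⟨0, by simpa only [zero_add, pow_one] using one_mem_commutatorsIn⟩
  | mul_left x hx y _ ih =>
    obtain ⟨n, hn⟩ := ih
    exact ⟨n + 1, pow_succ' (commutatorsIn H) (n + 1) ▸ Set.mul_mem_mul hx hn⟩
  | inv_mul_cancel x hx y _ ih =>
    obtain ⟨a, ha, b, hb, rfl⟩ := hx
    obtain ⟨n, hn⟩ := ih
    exact ⟨n + 1, pow_succ' (commutatorsIn H) (n + 1) ▸
      Set.mul_mem_mul ⟨b, hb, a, ha, (commutatorElement_inv a b).symm⟩ hn⟩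

end CommutatorLength

section Displacement

open scoped Pointwise

variable {G : Type*} [Group G] {F : G} {H : Subgroup G} {m n : ℕ} {a h x : G}

/-- `F` `m`-displaces `H`: the conjugates `FⁱHF⁻ⁱ`, `i = 0, …, m`, pairwise commute. -/
def Displaces (F : G) (H : Subgroup G) (m : ℕ) : Prop :=
  ∀ i ≤ m, ∀ j ≤ m, i ≠ j →
    ∀ a ∈ H, ∀ b ∈ H, Commute (F ^ i * a * (F ^ i)⁻¹) (F ^ j * b * (F ^ j)⁻¹)

/-- The subgroup generated by the first `n` conjugates `FⁱHF⁻ⁱ`, `i = 0, …, n - 1`. It contains the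
entries of the commutators that represent an element of `[H, H]`. -/
def conjSpan (F : G) (H : Subgroup G) (n : ℕ) : Subgroup G :=
  ⨆ i < n, MulAut.conj (F ^ i) • H

theorem conjSpan_le_iff {K : Subgroup G} :
    conjSpan F H n ≤ K ↔ ∀ i < n, ∀ a ∈ H, MulAut.conj (F ^ i) a ∈ K :=
  iSup₂_le_iff.trans <| forall₂_congr fun _ _ => Subgroup.map_le_iff_le_comap

theorem conj_pow_mem_conjSpan {i : ℕ} (hi : i < n) (ha : a ∈ H) :
    MulAut.conj (F ^ i) a ∈ conjSpan F H n :=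
  conjSpan_le_iff.mp le_rfl i hi a ha

theorem conj_conj_pow (F a : G) (i : ℕ) :
    MulAut.conj F (MulAut.conj (F ^ i) a) = MulAut.conj (F ^ (i + 1)) a := by
  rw [pow_succ', map_mul, MulAut.mul_apply]

theorem conjSpan_mono (hmn : m ≤ n) : conjSpan F H m ≤ conjSpan F H n :=
  conjSpan_le_iff.mpr fun _ hi _ ha => conj_pow_mem_conjSpan (hi.trans_le hmn) ha

theorem le_conjSpan_succ : H ≤ conjSpan F H (n + 1) := fun a ha => by
  simpa only [pow_zero, map_one, MulAut.one_apply] using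
    conj_pow_mem_conjSpan (F := F) n.succ_pos ha

theorem conj_mem_conjSpan_succ (hx : x ∈ conjSpan F H n) :
    MulAut.conj F x ∈ conjSpan F H (n + 1) := by
  suffices conjSpan F H n ≤ (conjSpan F H (n + 1)).comap (MulAut.conj F).toMonoidHom from this hx
  refine conjSpan_le_iff.mpr fun i hi a ha => ?_
  change MulAut.conj F (MulAut.conj (F ^ i) a) ∈ conjSpan F H (n + 1)
  rw [conj_conj_pow]
  exact conj_pow_mem_conjSpan (Nat.succ_lt_succ hi) ha

theorem Displaces.mono (hF : Displaces F H n) (hmn : m ≤ n) : Displaces F H m :=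
  fun i hi j hj => hF i (hi.trans hmn) j (hj.trans hmn)

theorem Displaces.commute_conj (hF : Displaces F H n) (hx : x ∈ conjSpan F H n) (hh : h ∈ H) :
    Commute (MulAut.conj F x) h := by
  suffices conjSpan F H n ≤ (Subgroup.centralizer {h}).comap (MulAut.conj F).toMonoidHom from
    Subgroup.mem_centralizer_singleton_iff.mp (this hx)
  refine conjSpan_le_iff.mpr fun i hi a ha => Subgroup.mem_centralizer_singleton_iff.mpr ?_
  change Commute (MulAut.conj F (MulAut.conj (F ^ i) a)) h
  rw [conj_conj_pow]
  simpa only [pow_zero, one_mul, inv_one, mul_one, MulAut.conj_apply] using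
    hF (i + 1) hi 0 n.zero_le i.succ_ne_zero a ha h hh

theorem Displaces.exists_eq_commutatorElement_mul_commutatorElement (hF : Displaces F H n)
    (hh : h ∈ commutatorsIn H ^ (n + 1)) :
    ∃ A ∈ conjSpan F H (n + 1), ∃ B ∈ conjSpan F H (n + 1), ∃ X ∈ conjSpan F H n,
      h = ⁅A, B⁆ * ⁅X, F⁆ := by
  induction n generalizing h with
  | zero =>
    rw [zero_add, pow_one] at hh
    obtain ⟨a, ha, b, hb, rfl⟩ := hh
    exact ⟨a, le_conjSpan_succ ha, b, le_conjSpan_succ hb, 1, one_mem _, by simp⟩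
  | succ n ih =>
    rw [pow_succ'] at hh
    obtain ⟨_, ⟨a, ha, b, hb, rfl⟩, k, hk, rfl⟩ := hh
    obtain ⟨A, hA, B, hB, X, hX, hk_eq⟩ := ih (hF.mono n.le_succ) hk
    have hkH : k ∈ H := mem_of_mem_commutatorsIn_pow hk
    have hFX : MulAut.conj F X ∈ conjSpan F H (n + 1) := conj_mem_conjSpan_succ hX
    refine ⟨a * MulAut.conj F A, mul_mem (le_conjSpan_succ ha) (conj_mem_conjSpan_succ hA),
      b * MulAut.conj F B, mul_mem (le_conjSpan_succ hb) (conj_mem_conjSpan_succ hB),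
      MulAut.conj F X * k, mul_mem hFX (le_conjSpan_succ hkH), ?_⟩
    exact commutatorElement_mul_eq_of_commute_conj
      (hF.commute_conj hA ha) (hF.commute_conj hA hb) (hF.commute_conj hB ha)
      (hF.commute_conj hB hb) (hF.commute_conj (le_conjSpan_succ hkH) hkH)
      (hF.commute_conj (conjSpan_mono n.le_succ hX) hkH) (hF.commute_conj hFX hkH) hk_eq

theorem cl_le_two_of_infinitely_displaceable_general (H : Subgroup G) (F : G) (m : ℕ)
    (hF : Displaces F H m) (h : G) (hh : h ∈ commutatorsIn H ^ (m + 1)) :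
    ∃ a b c : G, h = ⁅a, b⁆ * ⁅c, F⁆ := by
  obtain ⟨a, _, b, _, c, _, hh_eq⟩ := hF.exists_eq_commutatorElement_mul_commutatorElement hh
  exact ⟨a, b, c, hh_eq⟩

end Displacement

/-- If `F` `m`-displaces the subgroup `H` for every `m ≥ 1` (i.e. all the
conjugates `FⁱHF⁻ⁱ`, `i = 0,1,2,…`, pairwise commute elementwise), then every
element of the commutator subgroup `[H,H]` is a product of at most two
commutators of elements of `G`. -/
theorem cl_le_two_of_infinitely_displaceable {G : Type*} [Group G]
    (H : Subgroup G) (F : G)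
    (hd : ∀ i j : ℕ, i ≠ j →
      ∀ a ∈ H, ∀ b ∈ H, Commute (F ^ i * a * (F ^ i)⁻¹) (F ^ j * b * (F ^ j)⁻¹))
    (h : G) (hh : h ∈ ⁅H, H⁆) :
    ∃ a b c d : G, h = ⁅a, b⁆ * ⁅c, d⁆ := by
  obtain ⟨m, hm⟩ := exists_mem_commutatorsIn_pow_succ hh
  obtain ⟨a, b, c, h_eq⟩ :=
    cl_le_two_of_infinitely_displaceable_general H F m (fun i _ j _ => hd i j) h hm
  exact ⟨a, b, c, F, h_eq⟩
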